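/- arXiv:2305.00851 — 4 statements merged into one kernel-verified Lean document; each statement's English description precedes it below -/
import Mathlib

section
/- Theorem 2 (no robustness-accuracy tradeoff, discrete form): fix λ ≥ 0, λ₁ ≥ 0, λ₂ ≥ 0 and let g : G → Bool be a Bayes classifier for p that is strict on the support (for every x with μ x > 0, p(x, g x) > p(x, ¬(g x))). Define the robust loss L_rob(f,g) = λ₁·L_adv(f,g) + λ₂·L_over(f,g) and the combined objective J(f) = Risk(f) + λ·L_rob(f,g). Then any f : G → Bool minimizing J over all classifiers G → Bool is Bayes optimal, i.e., Risk(f) = Risk(g). -/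
/-- 0/1-loss. -/
def l01 {Y : Type*} [DecidableEq Y] (y y' : Y) : ℤ := if y = y' then 0 else 1

/-- Expected adversarial 0/1-loss. -/
def Ladv {G Y : Type*} [Fintype G] [DecidableEq Y]
    (μ : G → ℝ) (B : G → Finset G) (hB : ∀ x, x ∈ B x)
    (f g : G → Y) : ℝ :=
  ∑ x, μ x *
    ((((B x).filter (fun xt => g xt = g x)).sup'
        ⟨x, Finset.mem_filter.mpr ⟨hB x, rfl⟩⟩
        (fun xt => l01 (f xt) (g x) - l01 (f x) (g x)) : ℤ) : ℝ)

/-- Expected over-robust 0/1-loss. -/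
def Lover {G Y : Type*} [Fintype G] [DecidableEq Y]
    (μ : G → ℝ) (B : G → Finset G) (hB : ∀ x, x ∈ B x)
    (f g : G → Y) : ℝ :=
  ∑ x, μ x *
    ((((B x).filter (fun xt => f xt = f x)).sup'
        ⟨x, Finset.mem_filter.mpr ⟨hB x, rfl⟩⟩
        (fun xt => l01 (g xt) (f x) - l01 (g x) (f x)) : ℤ) : ℝ)
/-- Expected 0/1-loss (risk) of a binary node classifier. -/
def Risk {G : Type*} [Fintype G] (p : G × Bool → ℝ) (f : G → Bool) : ℝ :=
  ∑ xc : G × Bool, p xc * (if f xc.1 = xc.2 then 0 else 1)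

/-- Marginal distribution over graphs. -/
def marg {G : Type*} (p : G × Bool → ℝ) (x : G) : ℝ := p (x, false) + p (x, true)

/-!
The over-robust loss is the adversarial loss with the two classifiers exchanged, and the adversarial
loss is nonnegative and vanishes when they agree. Hence `g` minimizes the robust loss as well as the
risk, so a minimizer of their sum cannot exceed `g` in either summand.
-/

section RobustLoss

variable {G Y : Type*} [Fintype G] [DecidableEq Y]

theorem Ladv_nonneg {μ : G → ℝ} (hμ : ∀ x, 0 ≤ μ x) (B : G → Finset G) (hB : ∀ x, x ∈ B x)
    (f g : G → Y) : 0 ≤ Ladv μ B hB f g := by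
  refine Finset.sum_nonneg fun x _ => mul_nonneg (hμ x) (Int.cast_nonneg ?_)
  exact (Finset.le_sup'_iff _).mpr ⟨x, Finset.mem_filter.mpr ⟨hB x, rfl⟩, (sub_self _).ge⟩

theorem Ladv_self (μ : G → ℝ) (B : G → Finset G) (hB : ∀ x, x ∈ B x) (g : G → Y) :
    Ladv μ B hB g g = 0 := by
  refine Finset.sum_eq_zero fun x _ => mul_eq_zero_of_right _ (Int.cast_eq_zero.mpr ?_)
  refine Finset.sup'_eq_of_forall _ _ fun xt hxt => ?_
  rw [(Finset.mem_filter.mp hxt).2, sub_self]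

theorem Lover_eq_Ladv_swap (μ : G → ℝ) (B : G → Finset G) (hB : ∀ x, x ∈ B x) (f g : G → Y) :
    Lover μ B hB f g = Ladv μ B hB g f :=
  rfl

/-- The robust loss `λ₁ · L_adv(f, g) + λ₂ · L_over(f, g)`, with expectations taken against
arbitrary weights `μ`. -/
def robustLoss (μ : G → ℝ) (B : G → Finset G) (hB : ∀ x, x ∈ B x) (lam1 lam2 : ℝ)
    (f g : G → Y) : ℝ :=
  lam1 * Ladv μ B hB f g + lam2 * Lover μ B hB f g

theorem robustLoss_nonneg {μ : G → ℝ} (hμ : ∀ x, 0 ≤ μ x) (B : G → Finset G)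
    (hB : ∀ x, x ∈ B x) {lam1 lam2 : ℝ} (hlam1 : 0 ≤ lam1) (hlam2 : 0 ≤ lam2) (f g : G → Y) :
    0 ≤ robustLoss μ B hB lam1 lam2 f g :=
  add_nonneg (mul_nonneg hlam1 (Ladv_nonneg hμ B hB f g))
    (mul_nonneg hlam2 (Ladv_nonneg hμ B hB g f))

theorem robustLoss_self (μ : G → ℝ) (B : G → Finset G) (hB : ∀ x, x ∈ B x) (lam1 lam2 : ℝ)
    (g : G → Y) : robustLoss μ B hB lam1 lam2 g g = 0 := by
  simp only [robustLoss, Lover_eq_Ladv_swap, Ladv_self, mul_zero, add_zero]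

end RobustLoss

section MulticlassRisk

variable {G Y : Type*} [Fintype G] [Fintype Y] [DecidableEq Y]

/-- The expected 0/1-loss of a classifier with values in an arbitrary finite label type; for
`Y = Bool` it unfolds to `Risk`. -/
def multiclassRisk (p : G × Y → ℝ) (f : G → Y) : ℝ :=
  ∑ xc : G × Y, p xc * (if f xc.1 = xc.2 then 0 else 1)

theorem multiclassRisk_eq_sum_sub (p : G × Y → ℝ) (f : G → Y) :
    multiclassRisk p f = ∑ x, (∑ c, p (x, c) - p (x, f x)) := by
  rw [multiclassRisk, Fintype.sum_prod_type]
  refine Finset.sum_congr rfl fun x _ => ?_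
  calc ∑ c, p (x, c) * (if f x = c then 0 else 1)
      = ∑ c, (p (x, c) - if f x = c then p (x, c) else 0) :=
        Finset.sum_congr rfl fun c _ => by split_ifs <;> ring
    _ = ∑ c, p (x, c) - p (x, f x) := by
        rw [Finset.sum_sub_distrib, Fintype.sum_ite_eq]

theorem multiclassRisk_le_of_forall_apply_le {p : G × Y → ℝ} {g : G → Y}
    (hg : ∀ x c, p (x, c) ≤ p (x, g x)) (f : G → Y) :
    multiclassRisk p g ≤ multiclassRisk p f := by
  rw [multiclassRisk_eq_sum_sub, multiclassRisk_eq_sum_sub]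
  exact Finset.sum_le_sum fun x _ => sub_le_sub_left (hg x (f x)) _

theorem no_robustness_accuracy_tradeoff_general (p : G × Y → ℝ) {μ : G → ℝ} (hμ : ∀ x, 0 ≤ μ x)
    (B : G → Finset G) (hB : ∀ x, x ∈ B x)
    {lam lam1 lam2 : ℝ} (hlam : 0 ≤ lam) (hlam1 : 0 ≤ lam1) (hlam2 : 0 ≤ lam2)
    {g : G → Y} (hg : ∀ x c, p (x, c) ≤ p (x, g x)) {f : G → Y}
    (hmin : ∀ f' : G → Y,
      multiclassRisk p f + lam * robustLoss μ B hB lam1 lam2 f g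
        ≤ multiclassRisk p f' + lam * robustLoss μ B hB lam1 lam2 f' g) :
    multiclassRisk p f = multiclassRisk p g := by
  refine le_antisymm ?_ (multiclassRisk_le_of_forall_apply_le hg f)
  calc multiclassRisk p f
      ≤ multiclassRisk p f + lam * robustLoss μ B hB lam1 lam2 f g :=
        le_add_of_nonneg_right (mul_nonneg hlam (robustLoss_nonneg hμ B hB hlam1 hlam2 f g))
    _ ≤ multiclassRisk p g + lam * robustLoss μ B hB lam1 lam2 g g := hmin g
    _ = multiclassRisk p g := by rw [robustLoss_self, mul_zero, add_zero]

end MulticlassRisk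

section Marginal

variable {G : Type*} {p : G × Bool → ℝ}

theorem marg_nonneg (hp : ∀ xc, 0 ≤ p xc) (x : G) : 0 ≤ marg p x :=
  add_nonneg (hp _) (hp _)

theorem marg_eq_add_not (p : G × Bool → ℝ) (x : G) (c : Bool) :
    marg p x = p (x, c) + p (x, !c) := by
  cases c
  · rfl
  · exact add_comm _ _

theorem apply_le_of_lt_of_marg_pos (hp : ∀ xc, 0 ≤ p xc) {g : G → Bool}
    (hg : ∀ x, 0 < marg p x → p (x, !(g x)) < p (x, g x)) (x : G) (c : Bool) :
    p (x, c) ≤ p (x, g x) := by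
  obtain rfl | rfl := Bool.eq_or_eq_not c (g x)
  · exact le_rfl
  · by_contra! hlt
    have marg_pos : 0 < marg p x := by
      rw [marg_eq_add_not p x (g x)]
      exact add_pos_of_nonneg_of_pos (hp _) ((hp _).trans_lt hlt)
    exact hlt.not_gt (hg x marg_pos)

end Marginal

/-- Theorem 2 (no robustness-accuracy tradeoff, discrete form): any minimizer
of the combined standard-plus-robust objective is Bayes optimal. -/
theorem no_robustness_accuracy_tradeoff
    {G : Type*} [Fintype G]
    (p : G × Bool → ℝ) (hp : ∀ xc, 0 ≤ p xc)
    (hsum : ∑ xc : G × Bool, p xc = 1)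
    (B : G → Finset G) (hB : ∀ x, x ∈ B x)
    (lam lam1 lam2 : ℝ) (hlam : 0 ≤ lam) (hlam1 : 0 ≤ lam1) (hlam2 : 0 ≤ lam2)
    (g : G → Bool)
    (hg : ∀ x : G, 0 < marg p x → p (x, !(g x)) < p (x, g x))
    (f : G → Bool)
    (hmin : ∀ f' : G → Bool,
      Risk p f + lam * (lam1 * Ladv (marg p) B hB f g + lam2 * Lover (marg p) B hB f g)
        ≤ Risk p f' + lam * (lam1 * Ladv (marg p) B hB f' g + lam2 * Lover (marg p) B hB f' g)) :
    Risk p f = Risk p g :=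
  no_robustness_accuracy_tradeoff_general p (marg_nonneg hp) B hB hlam hlam1 hlam2
    (apply_le_of_lt_of_marg_pos hp hg) hmin
end

section
/- Theorem 3 (minimizing only the robust loss does not imply good generalization, discrete form): fix λ₁ ≥ 0, λ₂ ≥ 0, let g : G → Bool be a Bayes classifier for p that is strict on the support (for every x with μ x > 0, p(x, g x) > p(x, ¬(g x))), and assume the support is nonempty (there exists x with μ x > 0). Then the classifier f defined by f x = ¬(g x) minimizes the robust loss L_rob(·, g) = λ₁·L_adv(·,g) + λ₂·L_over(·,g) over all classifiers G → Bool (in fact L_rob(f,g) = 0), yet Risk(f) > Risk(g). -/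
/-!
Relabelling the reference classifier `g` by an injective map leaves its level sets, hence its
decision boundary, unchanged. Both robust losses compare only graphs on the same side of that
boundary, so they vanish at the flipped classifier, while strictness of `g` on the support makes
every flip there cost risk.
-/

section RobustLoss

variable {G Y : Type*} [Fintype G] [DecidableEq Y] {μ : G → ℝ} {B : G → Finset G}
  {hB : ∀ x, x ∈ B x}

theorem lover_eq_ladv_swap (f g : G → Y) : Lover μ B hB f g = Ladv μ B hB g f := rfl

theorem ladv_nonneg (hμ : ∀ x, 0 ≤ μ x) (f g : G → Y) : 0 ≤ Ladv μ B hB f g := by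
  refine Finset.sum_nonneg fun x _ => mul_nonneg (hμ x) (Int.cast_nonneg ?_)
  have hx : x ∈ (B x).filter (fun y => g y = g x) := Finset.mem_filter.mpr ⟨hB x, rfl⟩
  exact Finset.le_sup'_of_le _ hx (sub_self _).ge

theorem lover_nonneg (hμ : ∀ x, 0 ≤ μ x) (f g : G → Y) : 0 ≤ Lover μ B hB f g :=
  (ladv_nonneg hμ g f).trans_eq (lover_eq_ladv_swap f g).symm

theorem ladv_eq_zero_of_forall_mem {f g : G → Y}
    (hfg : ∀ x, ∀ y ∈ B x, g y = g x → f y = f x) : Ladv μ B hB f g = 0 := by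
  refine Finset.sum_eq_zero fun x _ => mul_eq_zero_of_right _ (Int.cast_eq_zero.mpr ?_)
  refine Finset.sup'_eq_of_forall _ _ fun y hy => ?_
  obtain ⟨hyB, hgy⟩ := Finset.mem_filter.mp hy
  rw [hfg x y hyB hgy, sub_self]

theorem ladv_comp_left_eq_zero (σ : Y → Y) (g : G → Y) : Ladv μ B hB (σ ∘ g) g = 0 :=
  ladv_eq_zero_of_forall_mem fun _ _ _ h => congrArg σ h

theorem lover_comp_left_eq_zero {σ : Y → Y} (hσ : σ.Injective) (g : G → Y) :
    Lover μ B hB (σ ∘ g) g = 0 := by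
  rw [lover_eq_ladv_swap]
  exact ladv_eq_zero_of_forall_mem fun _ _ _ h => hσ h

/-- The robust loss `L_rob(f, g)`: the combination of the adversarial and the over-robust loss of
`f` relative to the reference classifier `g`, with weights `lam1` and `lam2`. -/
def Lrob (μ : G → ℝ) (B : G → Finset G) (hB : ∀ x, x ∈ B x) (lam1 lam2 : ℝ)
    (f g : G → Y) : ℝ :=
  lam1 * Ladv μ B hB f g + lam2 * Lover μ B hB f g

theorem lrob_nonneg (hμ : ∀ x, 0 ≤ μ x) {lam1 lam2 : ℝ} (hlam1 : 0 ≤ lam1) (hlam2 : 0 ≤ lam2)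
    (f g : G → Y) : 0 ≤ Lrob μ B hB lam1 lam2 f g :=
  add_nonneg (mul_nonneg hlam1 (ladv_nonneg hμ f g)) (mul_nonneg hlam2 (lover_nonneg hμ f g))

theorem lrob_comp_left_eq_zero {σ : Y → Y} (hσ : σ.Injective) (lam1 lam2 : ℝ) (g : G → Y) :
    Lrob μ B hB lam1 lam2 (σ ∘ g) g = 0 := by
  rw [Lrob, ladv_comp_left_eq_zero, lover_comp_left_eq_zero hσ, mul_zero, mul_zero, add_zero]

end RobustLoss

section Risk

variable {G : Type*} {p : G × Bool → ℝ}

theorem le_marg (hp : ∀ xc, 0 ≤ p xc) (x : G) (c : Bool) : p (x, c) ≤ marg p x := by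
  cases c
  · exact le_add_of_nonneg_right (hp _)
  · exact le_add_of_nonneg_left (hp _)

theorem le_of_marg_pos_imp_le (hp : ∀ xc, 0 ≤ p xc) {x : G} {c d : Bool}
    (h : 0 < marg p x → p (x, c) ≤ p (x, d)) : p (x, c) ≤ p (x, d) := by
  by_contra! hlt
  have hpos : 0 < marg p x := ((hp _).trans_lt hlt).trans_le (le_marg hp x c)
  exact (h hpos).not_gt hlt

variable [Fintype G]

theorem risk_eq_sum_marg_sub (p : G × Bool → ℝ) (f : G → Bool) :
    Risk p f = ∑ x, (marg p x - p (x, f x)) := by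
  rw [Risk, Fintype.sum_prod_type]
  refine Finset.sum_congr rfl fun x _ => ?_
  cases hfx : f x <;> simp [hfx, marg]

theorem risk_lt_risk {f g : G → Bool} (hle : ∀ x, p (x, f x) ≤ p (x, g x))
    (hlt : ∃ x, p (x, f x) < p (x, g x)) : Risk p g < Risk p f := by
  obtain ⟨x, hx⟩ := hlt
  rw [risk_eq_sum_marg_sub, risk_eq_sum_marg_sub]
  exact Finset.sum_lt_sum (fun y _ => sub_le_sub_left (hle y) _)
    ⟨x, Finset.mem_univ x, sub_lt_sub_left hx _⟩

end Risk

/-- Theorem 3 (minimizing only the robust loss does not imply good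
generalization): the classifier flipping the Bayes classifier everywhere
minimizes the robust loss (which is zero), yet has strictly larger risk. -/
theorem robust_minimizer_not_bayes
    {G : Type*} [Fintype G]
    (p : G × Bool → ℝ) (hp : ∀ xc, 0 ≤ p xc)
    (hsum : ∑ xc : G × Bool, p xc = 1)
    (B : G → Finset G) (hB : ∀ x, x ∈ B x)
    (lam1 lam2 : ℝ) (hlam1 : 0 ≤ lam1) (hlam2 : 0 ≤ lam2)
    (g : G → Bool)
    (hg : ∀ x : G, 0 < marg p x → p (x, !(g x)) < p (x, g x))
    (hne : ∃ x : G, 0 < marg p x) :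
    (lam1 * Ladv (marg p) B hB (fun x => !(g x)) g
        + lam2 * Lover (marg p) B hB (fun x => !(g x)) g = 0) ∧
    (∀ f' : G → Bool,
      lam1 * Ladv (marg p) B hB (fun x => !(g x)) g
          + lam2 * Lover (marg p) B hB (fun x => !(g x)) g
        ≤ lam1 * Ladv (marg p) B hB f' g + lam2 * Lover (marg p) B hB f' g) ∧
    Risk p g < Risk p (fun x => !(g x)) := by
  have hzero : Lrob (marg p) B hB lam1 lam2 (fun x => !(g x)) g = 0 :=
    lrob_comp_left_eq_zero Bool.not_injective lam1 lam2 g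
  refine ⟨hzero, fun f' => ?_, ?_⟩
  · exact hzero.trans_le (lrob_nonneg (marg_nonneg hp) hlam1 hlam2 f' g)
  · obtain ⟨x, hx⟩ := hne
    exact risk_lt_risk (fun y => le_of_marg_pos_imp_le hp fun hy => (hg y hy).le) ⟨x, hg x hx⟩
end

section
/- Single-edge change potential for the CSBM log-likelihood ratio (core computation of Theorem 4): for every adjacency row a : Fin n → Bool and every index u : Fin n, letting a' = Function.update a u (¬(a u)), one has D(a') − D(a) = −c₀ if a u = decide (y u = y*) (i.e., the flip removes a same-class edge or adds a different-class edge), and D(a') − D(a) = c₀ otherwise; moreover c₀ > 0, so exactly the flips removing a same-class edge or adding a different-class edge strictly decrease D, and all of them decrease it by the same amount. -/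
/-- Edge probability between classes in a homophilic CSBM. -/
def w (p q : ℝ) (c c' : Bool) : ℝ := if c = c' then p else q

/-- Log-likelihood ratio of an adjacency row of the target node. -/
noncomputable def Dll (p q : ℝ) {n : ℕ} (y : Fin n → Bool) (ystar : Bool)
    (a : Fin n → Bool) : ℝ :=
  ∑ i : Fin n,
    (if a i then
        Real.log (w p q ystar (y i)) - Real.log (w p q (!ystar) (y i))
      else
        Real.log (1 - w p q ystar (y i)) - Real.log (1 - w p q (!ystar) (y i)))

/-!
Each entry of the adjacency row contributes its own summand to `D`, so a flip at `u` changes only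
the summand of `u`. That summand is a log-likelihood ratio between two Bernoulli laws, and adding
the edge raises it by the difference of the log-odds of their parameters. The parameters are `p` and
`q` in one order or the other, according to the class of `u`, so every flip changes `D` by
`±(logit p - logit q)`; the log-odds are strictly increasing on `(0, 1)`.
-/

/-- The log-odds of a probability `x`; the constant `c₀` is `logit p - logit q`.
It is meaningful for `0 < x < 1` only: elsewhere it takes the values given by the convention
`Real.log x = Real.log |x|`, `Real.log 0 = 0`. -/
noncomputable def logit (x : ℝ) : ℝ := Real.log x - Real.log (1 - x)

/-- The log-likelihood ratio of the outcome `b` between the Bernoulli laws with success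
probabilities `s` and `t`; one summand of `Dll`. -/
noncomputable def bernoulliLLR (s t : ℝ) (b : Bool) : ℝ :=
  if b then Real.log s - Real.log t else Real.log (1 - s) - Real.log (1 - t)

theorem strictMonoOn_logit : StrictMonoOn logit (Set.Ioo 0 1) := by
  intro x hx z hz hxz
  have log_lt : Real.log x < Real.log z := Real.log_lt_log hx.1 hxz
  have log_one_sub_lt : Real.log (1 - z) < Real.log (1 - x) :=
    Real.log_lt_log (sub_pos.2 hz.2) (sub_lt_sub_left hxz 1)
  exact sub_lt_sub log_lt log_one_sub_lt

theorem bernoulliLLR_not_sub (s t : ℝ) (b : Bool) :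
    bernoulliLLR s t (!b) - bernoulliLLR s t b =
      if b then -(logit s - logit t) else logit s - logit t := by
  cases b <;> simp only [bernoulliLLR, logit, Bool.not_true, Bool.not_false, Bool.false_eq_true,
    if_true, if_false] <;> ring

theorem sum_update_sub_sum {ι α M : Type*} [Fintype ι] [DecidableEq ι] [AddCommGroup M]
    (f : ι → α → M) (a : ι → α) (u : ι) (b : α) :
    ∑ i, f i (Function.update a u b i) - ∑ i, f i (a i) = f u b - f u (a u) := by
  rw [← Finset.sum_sub_distrib, Fintype.sum_eq_single u, Function.update_self]
  intro i hi
  rw [Function.update_of_ne hi, sub_self]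

theorem apply_w_sub_apply_w_not {M : Type*} [AddGroup M] (f : ℝ → M) (p q : ℝ) (c d : Bool) :
    f (w p q c d) - f (w p q (!c) d) = if d = c then f p - f q else -(f p - f q) := by
  cases c <;> cases d <;> simp [w]

section Dll

variable (p q : ℝ) {n : ℕ} (y : Fin n → Bool) (ystar : Bool) (a : Fin n → Bool) (u : Fin n)

theorem Dll_eq_sum_bernoulliLLR :
    Dll p q y ystar a =
      ∑ i, bernoulliLLR (w p q ystar (y i)) (w p q (!ystar) (y i)) (a i) :=
  rfl

theorem Dll_update_not_sub :
    Dll p q y ystar (Function.update a u (!(a u))) - Dll p q y ystar a =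
      if a u = decide (y u = ystar) then -(logit p - logit q) else logit p - logit q := by
  simp only [Dll_eq_sum_bernoulliLLR]
  rw [sum_update_sub_sum fun i => bernoulliLLR (w p q ystar (y i)) (w p q (!ystar) (y i)),
    bernoulliLLR_not_sub, apply_w_sub_apply_w_not]
  by_cases same_class : y u = ystar <;> cases a u <;> simp [same_class]

end Dll

/-- Single-edge change potential for the CSBM log-likelihood ratio: flipping
one entry of the adjacency row changes `D` by exactly `−c₀` when the flip
removes a same-class edge or adds a different-class edge, and by `c₀`
otherwise, with `c₀ > 0`. -/
theorem csbm_single_flip_change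
    (p q : ℝ) (hq : 0 < q) (hqp : q < p) (hp1 : p < 1)
    {n : ℕ} (y : Fin n → Bool) (ystar : Bool)
    (a : Fin n → Bool) (u : Fin n) :
    0 < Real.log p - Real.log q + Real.log (1 - q) - Real.log (1 - p) ∧
    (a u = decide (y u = ystar) →
      Dll p q y ystar (Function.update a u (!(a u))) - Dll p q y ystar a
        = -(Real.log p - Real.log q + Real.log (1 - q) - Real.log (1 - p))) ∧
    (a u ≠ decide (y u = ystar) →
      Dll p q y ystar (Function.update a u (!(a u))) - Dll p q y ystar a
        = Real.log p - Real.log q + Real.log (1 - q) - Real.log (1 - p)) := by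
  have c₀_eq : Real.log p - Real.log q + Real.log (1 - q) - Real.log (1 - p) =
      logit p - logit q := by
    unfold logit
    ring
  rw [c₀_eq, Dll_update_not_sub]
  have logit_lt : logit q < logit p :=
    strictMonoOn_logit ⟨hq, hqp.trans hp1⟩ ⟨hq.trans hqp, hp1⟩ hqp
  exact ⟨sub_pos.2 logit_lt, fun h => if_pos h, fun h => if_neg h⟩
end

section
/- Theorem 4 (optimal attack on CSBMs, quantitative form): for any two adjacency rows a a' : Fin n → Bool, letting k be the number of indices i with a i ≠ a' i, one has D(a') ≥ D(a) − k·c₀, with equality if and only if every flipped index i (i.e., every i with a i ≠ a' i) satisfies a i = decide (y i = y*). Hence the log-likelihood ratio D is decreased fastest, per structure change, exactly by removing same-class edges or adding different-class edges to the target node. -/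
/-!
Each coordinate of a row contributes most to the log-likelihood ratio when it agrees with the
homophilic row `b`, which connects the target to exactly the nodes of its own class, and loses the
same amount `c₀` otherwise. Hence `D a = D b - d(a, b) c₀` for the Hamming distance `d`, and the
theorem is the triangle inequality `d(a', b) ≤ d(a', a) + d(a, b)`, which is an equality exactly
when every coordinate of `a` agrees with `a'` or with `b`.
-/

theorem hammingDist_eq_add_iff {ι : Type*} {β : ι → Type*} [Fintype ι] [∀ i, DecidableEq (β i)]
    (x y z : ∀ i, β i) :
    hammingDist x z = hammingDist x y + hammingDist y z ↔ ∀ i, y i = x i ∨ y i = z i := by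
  have coord_le (i : ι) : (if x i ≠ z i then 1 else 0) ≤
      (if x i ≠ y i then 1 else 0) + (if y i ≠ z i then 1 else 0) := by
    grind
  have coord_eq_iff (i : ι) : (if x i ≠ z i then 1 else 0) =
      (if x i ≠ y i then 1 else 0) + (if y i ≠ z i then 1 else 0) ↔ y i = x i ∨ y i = z i := by
    grind
  simp only [hammingDist, Finset.card_filter, ← Finset.sum_add_distrib]
  rw [Finset.sum_eq_sum_iff_of_le fun i _ => coord_le i]
  simp only [Finset.mem_univ, true_imp_iff, coord_eq_iff]

/-- The logarithm of the odds ratio of same-class to different-class edges: the constant `c₀`. -/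
noncomputable def logOddsRatio (p q : ℝ) : ℝ :=
  Real.log p - Real.log q + Real.log (1 - q) - Real.log (1 - p)

theorem logOddsRatio_pos {p q : ℝ} (hq : 0 < q) (hqp : q < p) (hp1 : p < 1) :
    0 < logOddsRatio p q := by
  have log_edge_lt : Real.log q < Real.log p := Real.log_lt_log hq hqp
  have log_nonedge_lt : Real.log (1 - p) < Real.log (1 - q) :=
    Real.log_lt_log (by linarith) (by linarith)
  unfold logOddsRatio
  linarith

/-- The contribution to the log-likelihood ratio `Dll` of a node of class `c`, where `e` records
whether it is adjacent to the target. -/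
noncomputable def entryLogRatio (p q : ℝ) (ystar c e : Bool) : ℝ :=
  if e then Real.log (w p q ystar c) - Real.log (w p q (!ystar) c)
  else Real.log (1 - w p q ystar c) - Real.log (1 - w p q (!ystar) c)

theorem entryLogRatio_eq_sub (p q : ℝ) (ystar c e : Bool) :
    entryLogRatio p q ystar c e = entryLogRatio p q ystar c (decide (c = ystar)) -
      (if e ≠ decide (c = ystar) then 1 else 0) * logOddsRatio p q := by
  cases ystar <;> cases c <;> cases e <;> simp [entryLogRatio, logOddsRatio, w] <;> ring

/-- The adjacency row joining the target, of class `ystar`, to exactly the nodes of its class. -/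
def homophilicRow {n : ℕ} (y : Fin n → Bool) (ystar : Bool) : Fin n → Bool :=
  fun i => decide (y i = ystar)

theorem Dll_eq_sub_hammingDist (p q : ℝ) {n : ℕ} (y : Fin n → Bool) (ystar : Bool)
    (a : Fin n → Bool) :
    Dll p q y ystar a = Dll p q y ystar (homophilicRow y ystar) -
      hammingDist a (homophilicRow y ystar) * logOddsRatio p q := by
  calc Dll p q y ystar a
      = ∑ i, (entryLogRatio p q ystar (y i) (homophilicRow y ystar i) -
          (if a i ≠ homophilicRow y ystar i then 1 else 0) * logOddsRatio p q) :=
        Finset.sum_congr rfl fun i _ => entryLogRatio_eq_sub p q ystar (y i) (a i)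
    _ = Dll p q y ystar (homophilicRow y ystar) -
          hammingDist a (homophilicRow y ystar) * logOddsRatio p q := by
        rw [Finset.sum_sub_distrib, ← Finset.sum_mul, Finset.sum_boole]
        rfl

/-- Theorem 4 (optimal attack on CSBMs, quantitative form): perturbing the
adjacency row in `k` positions decreases the log-likelihood ratio `D` by at
most `k·c₀`, with equality iff every flipped position removes a same-class
edge or adds a different-class edge. -/
theorem csbm_optimal_attack
    (p q : ℝ) (hq : 0 < q) (hqp : q < p) (hp1 : p < 1)
    {n : ℕ} (y : Fin n → Bool) (ystar : Bool)
    (a a' : Fin n → Bool) :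
    Dll p q y ystar a
        - ((Finset.univ.filter (fun i : Fin n => a i ≠ a' i)).card : ℝ)
          * (Real.log p - Real.log q + Real.log (1 - q) - Real.log (1 - p))
      ≤ Dll p q y ystar a' ∧
    (Dll p q y ystar a'
        = Dll p q y ystar a
          - ((Finset.univ.filter (fun i : Fin n => a i ≠ a' i)).card : ℝ)
            * (Real.log p - Real.log q + Real.log (1 - q) - Real.log (1 - p)) ↔
      ∀ i : Fin n, a i ≠ a' i → a i = decide (y i = ystar)) := by
  let b := homophilicRow y ystar
  have c₀_pos : 0 < logOddsRatio p q := logOddsRatio_pos hq hqp hp1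
  have Dll_a' : Dll p q y ystar a' = Dll p q y ystar b - hammingDist a' b * logOddsRatio p q :=
    Dll_eq_sub_hammingDist p q y ystar a'
  have Dll_a_sub : Dll p q y ystar a - hammingDist a a' * logOddsRatio p q =
      Dll p q y ystar b - (hammingDist a' a + hammingDist a b : ℕ) * logOddsRatio p q := by
    rw [Dll_eq_sub_hammingDist p q y ystar a, hammingDist_comm a a']
    push_cast
    ring
  change Dll p q y ystar a - hammingDist a a' * logOddsRatio p q ≤ _ ∧
    (_ = Dll p q y ystar a - hammingDist a a' * logOddsRatio p q ↔ _)
  rw [Dll_a_sub, Dll_a']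
  constructor
  · gcongr
    exact hammingDist_triangle a' a b
  · rw [sub_right_inj, mul_left_inj' c₀_pos.ne', Nat.cast_inj, hammingDist_eq_add_iff]
    exact forall_congr' fun i => or_iff_not_imp_left
end
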